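/- Let n ≥ 1, m > n, and let p : ℝ^n → [1,∞) be a measurable exponent with 2 ≤ p⁻ and p⁺ < ∞. Define ζ(t) = 2/p⁻ for 0 < t ≤ 1 and ζ(t) = 2/p⁺ for t > 1, and define ς(t) = (p⁻/p⁺)(1 − 1/p⁻) + ζ(t)(1 − p⁻/p⁺) if either [0 < t ≤ 1 and 2 ≤ p⁻ ≤ 3] or [t > 1 and 1 − 1/p⁻ > 2/p⁺], and ς(t) = 1 − 1/p⁻ if either [0 < t ≤ 1 and p⁻ > 3] or [t > 1 and 1 − 1/p⁻ ≤ 2/p⁺]. Then there exists a constant C > 0, depending only on m, n and p, such that for every t > 0 and all u, v ∈ L^{p(·)}(ℝ^n) ∩ L^2(ℝ^n), ‖η_{t,m} * (uv)‖_{L^{p(·)}(ℝ^n)∩L^2(ℝ^n)} ≤ C max(t^{−nς(t)}, t^{−n/2}) ‖u‖_{L^{p(·)}(ℝ^n)∩L^2(ℝ^n)} ‖v‖_{L^{p(·)}(ℝ^n)∩L^2(ℝ^n)}. -/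

import Mathlib

open MeasureTheory Filter Real
open scoped ENNReal

noncomputable section

/-- Euclidean space `ℝⁿ`. -/
abbrev Esp (n : ℕ) := EuclideanSpace ℝ (Fin n)

/-- The variable exponent modular `ρ_{p(·)}(f) = ∫_{ℝⁿ} |f(x)|^{p(x)} dx`. -/
def vMod (n : ℕ) (p : Esp n → ℝ) (f : Esp n → ℝ) : ℝ≥0∞ :=
  ∫⁻ x, (ENNReal.ofReal |f x|) ^ (p x) ∂volume

/-- The Luxemburg norm `‖f‖_{L^{p(·)}} = inf {λ > 0 : ρ_{p(·)}(f/λ) ≤ 1}`. -/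
def luxNorm (n : ℕ) (p : Esp n → ℝ) (f : Esp n → ℝ) : ℝ :=
  sInf {lam : ℝ | 0 < lam ∧ vMod n p (fun x => f x / lam) ≤ 1}

/-- Membership in the variable exponent Lebesgue space `L^{p(·)}(ℝⁿ)`. -/
def MemVLp (n : ℕ) (p : Esp n → ℝ) (f : Esp n → ℝ) : Prop :=
  AEMeasurable f volume ∧ ∃ lam : ℝ, 0 < lam ∧ vMod n p (fun x => f x / lam) ≤ 1

/-- Global log-Hölder continuity of `1/p` with decay value `l` (representing `l = 1/p_∞`). -/
def IsLogHolder (n : ℕ) (p : Esp n → ℝ) (l : ℝ) : Prop :=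
  ∃ c : ℝ, 0 < c ∧
    (∀ x y : Esp n, |1 / p x - 1 / p y| ≤ c / Real.log (Real.exp 1 + 1 / ‖x - y‖)) ∧
    (∀ x : Esp n, |1 / p x - l| ≤ c / Real.log (Real.exp 1 + ‖x‖))

/-- The kernel `η_{t,m}(x) = t^{-n} (1 + |x|/t)^{-m}`. -/
def etaKer (n : ℕ) (t m : ℝ) (x : Esp n) : ℝ :=
  t ^ (-(n : ℝ)) * (1 + ‖x‖ / t) ^ (-m)

/-- Convolution `(u * v)(x) = ∫ u(x - y) v(y) dy`. -/
def convR (n : ℕ) (u v : Esp n → ℝ) (x : Esp n) : ℝ :=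
  ∫ y, u (x - y) * v y ∂volume

/-- Pointwise estimate behind the modular bound. -/
lemma aux_real (A G T s r q z w : ℝ) (hA : 1 ≤ A) (hG : 1 ≤ G) (hs : 0 < s) (hT : 0 < T)
    (hr : 1 ≤ r) (hq : r ≤ q) (hz : 0 ≤ z) (hw : 0 ≤ w)
    (h1 : z ^ r ≤ A ^ (r - 1) * w) (h2 : w ≤ s * G) (h3 : s ^ (1 / r - 1 / q) ≤ T) :
    (z / (A * G * T)) ^ q ≤ w / (A * G) := by
  have hA0 : 0 < A := by linarith
  have hG0 : 0 < G := by linarith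
  have hr0 : 0 < r := by linarith
  have hq0 : 0 < q := by linarith
  have hqr : 1 ≤ q / r := (one_le_div hr0).2 hq
  have e1 : z ^ q = (z ^ r) ^ (q / r) := by
    rw [← Real.rpow_mul hz]; congr 1; field_simp
  have e2 : z ^ q ≤ (A ^ (r - 1) * w) ^ (q / r) := by
    rw [e1]; exact Real.rpow_le_rpow (by positivity) h1 (by positivity)
  have e3 : w ^ (q / r) ≤ (s * G) ^ (q / r - 1) * w := by
    have : w ^ (q / r) = w ^ (q / r - 1) * w := by
      rcases hw.eq_or_lt with h | h
      · subst h
        rw [Real.zero_rpow (by positivity)]; simp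
      · nth_rewrite 3 [← Real.rpow_one w]
        rw [← Real.rpow_add h]; congr 1; ring
    rw [this]
    exact mul_le_mul_of_nonneg_right (Real.rpow_le_rpow hw h2 (by linarith)) hw
  have e4 : s ^ (q / r - 1) ≤ T ^ q := by
    have : s ^ (q / r - 1) = (s ^ (1 / r - 1 / q)) ^ q := by
      rw [← Real.rpow_mul hs.le]; congr 1; field_simp
    rw [this]
    exact Real.rpow_le_rpow (by positivity) h3 hq0.le
  have e5 : G ^ (q / r - 1) ≤ G ^ (q - 1) := by
    apply Real.rpow_le_rpow_of_exponent_le hG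
    have : q / r ≤ q := div_le_self hq0.le hr
    linarith
  have e6 : (A ^ (r - 1)) ^ (q / r) ≤ A ^ (q - 1) := by
    rw [← Real.rpow_mul hA0.le]
    apply Real.rpow_le_rpow_of_exponent_le hA
    have : (r - 1) * (q / r) = q - q / r := by field_simp
    rw [this]; linarith
  have e7 : z ^ q ≤ A ^ (q - 1) * (T ^ q * G ^ (q - 1) * w) := by
    refine e2.trans ?_
    rw [Real.mul_rpow (by positivity) hw]
    refine mul_le_mul e6 (e3.trans ?_) (by positivity) (by positivity)
    rw [Real.mul_rpow hs.le hG0.le]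
    gcongr
  rw [Real.div_rpow hz (by positivity), div_le_div_iff₀ (by positivity) (by positivity)]
  rw [Real.mul_rpow (by positivity) hT.le, Real.mul_rpow hA0.le hG0.le]
  have eA : A ^ q = A ^ (q - 1) * A := by
    nth_rewrite 3 [← Real.rpow_one A]
    rw [← Real.rpow_add hA0]; congr 1; ring
  have eG : G ^ q = G ^ (q - 1) * G := by
    nth_rewrite 3 [← Real.rpow_one G]
    rw [← Real.rpow_add hG0]; congr 1; ring
  rw [eA, eG]
  calc z ^ q * (A * G) ≤ (A ^ (q - 1) * (T ^ q * G ^ (q - 1) * w)) * (A * G) := by gcongr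
    _ = _ := by ring

/-- Weighted Jensen / Hölder. -/
lemma aux_jensen {α : Type*} [MeasurableSpace α] (μ : Measure α) (e h : α → ℝ≥0∞)
    (he : Measurable e) (hh : AEMeasurable h μ) (r : ℝ) (hr : 1 ≤ r) :
    (∫⁻ y, e y * h y ∂μ) ^ r ≤ (∫⁻ y, e y ∂μ) ^ (r - 1) * ∫⁻ y, e y * h y ^ r ∂μ := by
  rcases hr.eq_or_lt with h1 | h1
  · subst h1; simp
  have hr0 : 0 < r := by linarith
  have hc : (r / (r - 1)).HolderConjugate r := by
    have := Real.HolderConjugate.conjExponent h1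
    exact this.symm
  have hr1 : 0 < r - 1 := by linarith
  have := ENNReal.lintegral_mul_le_Lp_mul_Lq μ hc (f := fun y => e y ^ ((r - 1) / r))
    (g := fun y => e y ^ (1 / r) * h y) (by fun_prop) (by fun_prop)
  have e1 : ∫⁻ a, ((fun y => e y ^ ((r - 1) / r)) * fun y => e y ^ (1 / r) * h y) a ∂μ
      = ∫⁻ y, e y * h y ∂μ := by
    refine lintegral_congr fun y => ?_
    simp only [Pi.mul_apply]
    rw [← mul_assoc, ← ENNReal.rpow_add_of_nonneg _ _ (by positivity) (by positivity)]
    have : (r - 1) / r + 1 / r = 1 := by field_simp; ring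
    rw [this, ENNReal.rpow_one]
  have e2 : ∀ y, (e y ^ ((r - 1) / r)) ^ (r / (r - 1)) = e y := fun y => by
    rw [← ENNReal.rpow_mul]
    have : (r - 1) / r * (r / (r - 1)) = 1 := by field_simp
    rw [this, ENNReal.rpow_one]
  have e3 : ∀ y, (e y ^ (1 / r) * h y) ^ r = e y * h y ^ r := fun y => by
    rw [ENNReal.mul_rpow_of_nonneg _ _ hr0.le, ← ENNReal.rpow_mul]
    have : 1 / r * r = 1 := by field_simp
    rw [this, ENNReal.rpow_one]
  rw [e1] at this
  simp only [e2, e3] at this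
  have h4 := ENNReal.rpow_le_rpow this hr0.le
  refine h4.trans (le_of_eq ?_)
  rw [ENNReal.mul_rpow_of_nonneg _ _ hr0.le, ← ENNReal.rpow_mul, ← ENNReal.rpow_mul]
  congr 2
  · field_simp
  · rw [show 1 / r * r = 1 by field_simp, ENNReal.rpow_one]

/-- The mass of the kernel does not depend on `t`. -/
lemma aux_mass (n : ℕ) (m t : ℝ) (ht : 0 < t) :
    ∫⁻ x : Esp n, ENNReal.ofReal (etaKer n t m x)
      = ∫⁻ x : Esp n, ENNReal.ofReal ((1 + ‖x‖) ^ (-m)) := by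
  have hmap := Measure.map_addHaar_smul (volume : Measure (Esp n)) (inv_ne_zero ht.ne')
  have h1 : ∫⁻ x : Esp n, ENNReal.ofReal ((1 + ‖x‖) ^ (-m))
      ∂(Measure.map (t⁻¹ • ·) (volume : Measure (Esp n)))
      = ∫⁻ x : Esp n, ENNReal.ofReal ((1 + ‖x‖ / t) ^ (-m)) := by
    rw [lintegral_map (by fun_prop) (by fun_prop)]
    refine lintegral_congr fun x => ?_
    rw [norm_smul, Real.norm_of_nonneg (by positivity), div_eq_inv_mul]
  rw [hmap, lintegral_smul_measure] at h1
  have h2 : ∀ x : Esp n, ENNReal.ofReal (etaKer n t m x)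
      = ENNReal.ofReal (t ^ (-(n : ℝ))) * ENNReal.ofReal ((1 + ‖x‖ / t) ^ (-m)) := fun x => by
    rw [etaKer, ENNReal.ofReal_mul (by positivity)]
  simp only [h2]
  rw [lintegral_const_mul _ (by fun_prop), ← h1, smul_eq_mul, ← mul_assoc,
    ← ENNReal.ofReal_mul (by positivity)]
  have : t ^ (-(n : ℝ)) * |((t⁻¹) ^ Module.finrank ℝ (Esp n))⁻¹| = 1 := by
    rw [finrank_euclideanSpace_fin, inv_pow, inv_inv, abs_of_pos (by positivity),
      ← Real.rpow_natCast, ← Real.rpow_add ht]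
    simp
  rw [this]; simp

lemma aux_eta_meas (n : ℕ) (t m : ℝ) : Measurable (etaKer n t m) := by
  unfold etaKer; fun_prop

lemma aux_eta_nonneg (n : ℕ) (t m : ℝ) (ht : 0 < t) (x : Esp n) : 0 ≤ etaKer n t m x := by
  unfold etaKer; positivity

lemma aux_eta_le (n : ℕ) (t m : ℝ) (ht : 0 < t) (hm : 0 ≤ m) (x : Esp n) :
    etaKer n t m x ≤ t ^ (-(n : ℝ)) := by
  unfold etaKer
  have : (1 + ‖x‖ / t) ^ (-m) ≤ 1 := by
    apply Real.rpow_le_one_of_one_le_of_nonpos _ (by linarith)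
    have : 0 ≤ ‖x‖ / t := by positivity
    linarith
  exact mul_le_of_le_one_right (by positivity) this

/-- Modular bound. -/
lemma aux_main (n : ℕ) (m : ℝ) (hm : 0 ≤ m) (A : ℝ) (hA1 : 1 ≤ A)
    (hA : ∫⁻ x : Esp n, ENNReal.ofReal ((1 + ‖x‖) ^ (-m)) ≤ ENNReal.ofReal A)
    (t : ℝ) (ht : 0 < t) (r : ℝ) (hr : 1 ≤ r) (q : Esp n → ℝ) (T : ℝ) (hT : 0 < T)
    (hq : ∀ᵐ x, r ≤ q x ∧ (t ^ (-(n : ℝ))) ^ (1 / r - 1 / q x) ≤ T)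
    (g : Esp n → ℝ) (hg : AEMeasurable g volume)
    (hG : ∫⁻ x, (ENNReal.ofReal |g x|) ^ r ≤ 4) :
    vMod n q (fun x => convR n (etaKer n t m) g x / (A * 4 * T)) ≤ 1 := by
  set e : Esp n → ℝ≥0∞ := fun x => ENNReal.ofReal (etaKer n t m x) with he
  have hem : Measurable e := (aux_eta_meas n t m).ennreal_ofReal
  set h : Esp n → ℝ≥0∞ := fun x => ENNReal.ofReal |g x| with hh
  have hhm : AEMeasurable h volume := by
    have : AEMeasurable (fun x => |g x|) volume := continuous_abs.measurable.comp_aemeasurable hg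
    exact this.ennreal_ofReal
  have hmass : ∫⁻ x, e x ≤ ENNReal.ofReal A := by rw [he, aux_mass n m t ht]; exact hA
  have hmass' : ∀ x, ∫⁻ y, e (x - y) ≤ ENNReal.ofReal A := fun x => by
    rw [lintegral_sub_left_eq_self e x]; exact hmass
  set W : Esp n → ℝ≥0∞ := fun x => ∫⁻ y, e (x - y) * h y ^ r with hW
  have hA0 : 0 < A := by linarith
  have hs : 0 < t ^ (-(n : ℝ)) := by positivity
  have hZ : ∀ x, (ENNReal.ofReal |convR n (etaKer n t m) g x|) ^ r
      ≤ ENNReal.ofReal A ^ (r - 1) * W x := fun x => by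
    have h1 : ENNReal.ofReal |convR n (etaKer n t m) g x| ≤ ∫⁻ y, e (x - y) * h y := by
      rw [← Real.enorm_eq_ofReal_abs]
      refine (enorm_integral_le_lintegral_enorm _).trans (le_of_eq ?_)
      refine lintegral_congr fun y => ?_
      rw [enorm_mul, Real.enorm_eq_ofReal_abs, Real.enorm_eq_ofReal_abs,
        abs_of_nonneg (aux_eta_nonneg n t m ht _)]
    have h2 := aux_jensen volume (fun y => e (x - y)) h (by fun_prop) hhm r hr
    refine (ENNReal.rpow_le_rpow h1 (by linarith)).trans (h2.trans ?_)
    gcongr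
    · exact hmass' x
  have hWle : ∀ x, W x ≤ ENNReal.ofReal (t ^ (-(n : ℝ)) * 4) := fun x => by
    calc W x ≤ ∫⁻ y, ENNReal.ofReal (t ^ (-(n : ℝ))) * h y ^ r := by
            refine lintegral_mono fun y => ?_
            dsimp only
            gcongr
            exact ENNReal.ofReal_le_ofReal (aux_eta_le n t m ht hm _)
      _ = ENNReal.ofReal (t ^ (-(n : ℝ))) * ∫⁻ y, h y ^ r :=
            lintegral_const_mul' _ _ ENNReal.ofReal_ne_top
      _ ≤ ENNReal.ofReal (t ^ (-(n : ℝ))) * 4 := by gcongr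
      _ = _ := by rw [ENNReal.ofReal_mul hs.le]; simp
  have hWint : ∫⁻ x, W x ≤ ENNReal.ofReal (A * 4) := by
    rw [hW, lintegral_lintegral_swap]
    · calc ∫⁻ y, ∫⁻ x, e (x - y) * h y ^ r = ∫⁻ y, (∫⁻ x, e x) * h y ^ r := by
            refine lintegral_congr fun y => ?_
            rw [lintegral_mul_const _ (by fun_prop), lintegral_sub_right_eq_self e y]
        _ ≤ ∫⁻ y, ENNReal.ofReal A * h y ^ r := by
            refine lintegral_mono fun y => ?_
            dsimp only
            gcongr
        _ = ENNReal.ofReal A * ∫⁻ y, h y ^ r := lintegral_const_mul' _ _ ENNReal.ofReal_ne_top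
        _ ≤ ENNReal.ofReal A * 4 := by gcongr
        _ = _ := by rw [ENNReal.ofReal_mul hA0.le]; simp
    · have h1 : AEMeasurable (fun z : Esp n × Esp n => h z.2)
          ((volume : Measure (Esp n)).prod volume) := hhm.comp_snd
      have h2 : Measurable (fun z : Esp n × Esp n => e (z.1 - z.2)) := by fun_prop
      exact h2.aemeasurable.mul (h1.pow_const r)
  have key : ∀ᵐ x, (ENNReal.ofReal |convR n (etaKer n t m) g x / (A * 4 * T)|) ^ (q x)
      ≤ (ENNReal.ofReal (A * 4))⁻¹ * W x := by
    filter_upwards [hq] with x hx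
    have hWt : W x ≠ ⊤ := ne_top_of_le_ne_top ENNReal.ofReal_ne_top (hWle x)
    set z := |convR n (etaKer n t m) g x| with hz
    have hz0 : 0 ≤ z := abs_nonneg _
    have hw0 : 0 ≤ (W x).toReal := ENNReal.toReal_nonneg
    have hWr : W x = ENNReal.ofReal (W x).toReal := (ENNReal.ofReal_toReal hWt).symm
    have h1 : z ^ r ≤ A ^ (r - 1) * (W x).toReal := by
      have := hZ x
      rw [hWr, ENNReal.ofReal_rpow_of_nonneg hz0 (by linarith),
        ENNReal.ofReal_rpow_of_nonneg hA0.le (by linarith),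
        ← ENNReal.ofReal_mul (by positivity)] at this
      exact (ENNReal.ofReal_le_ofReal_iff (by positivity)).1 this
    have h2 : (W x).toReal ≤ t ^ (-(n : ℝ)) * 4 :=
      ENNReal.toReal_le_of_le_ofReal (by positivity) (hWle x)
    have h3 := aux_real A 4 T _ r (q x) z (W x).toReal hA1 (by norm_num) hs hT hr hx.1 hz0 hw0 h1
      h2 hx.2
    have hd : |convR n (etaKer n t m) g x / (A * 4 * T)| = z / (A * 4 * T) := by
      rw [abs_div, abs_of_pos (show 0 < A * 4 * T by positivity)]
    rw [hd, ENNReal.ofReal_rpow_of_nonneg (by positivity) (by linarith [hx.1]), hWr,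
      ← ENNReal.ofReal_inv_of_pos (by positivity), ← ENNReal.ofReal_mul (by positivity)]
    refine ENNReal.ofReal_le_ofReal (h3.trans (le_of_eq ?_))
    rw [div_eq_inv_mul]
  have hne0 : ENNReal.ofReal (A * 4) ≠ 0 := by
    rw [Ne, ENNReal.ofReal_eq_zero]; push Not; positivity
  calc vMod n q _ ≤ ∫⁻ x, (ENNReal.ofReal (A * 4))⁻¹ * W x := lintegral_mono_ae key
    _ = (ENNReal.ofReal (A * 4))⁻¹ * ∫⁻ x, W x :=
        lintegral_const_mul' _ _ (ENNReal.inv_ne_top.2 hne0)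
    _ ≤ (ENNReal.ofReal (A * 4))⁻¹ * ENNReal.ofReal (A * 4) := by gcongr
    _ = 1 := ENNReal.inv_mul_cancel hne0 ENNReal.ofReal_ne_top

/-- Above the Luxemburg norm the modular is at most one. -/
lemma aux_lux (n : ℕ) (p : Esp n → ℝ) (hp : ∀ x, 1 ≤ p x) (f : Esp n → ℝ)
    (hf : MemVLp n p f) (a : ℝ) (ha : luxNorm n p f < a) :
    vMod n p (fun x => f x / a) ≤ 1 := by
  obtain ⟨l, ⟨hl0, hl⟩, hla⟩ := exists_lt_of_csInf_lt hf.2 ha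
  refine le_trans (lintegral_mono fun x => ?_) hl
  dsimp only
  refine ENNReal.rpow_le_rpow (ENNReal.ofReal_le_ofReal ?_) (by linarith [hp x])
  rw [abs_div, abs_div, abs_of_pos hl0, abs_of_pos (hl0.trans hla)]
  gcongr

lemma aux_lux_nonneg (n : ℕ) (p : Esp n → ℝ) (f : Esp n → ℝ) : 0 ≤ luxNorm n p f :=
  Real.sInf_nonneg fun _ h => h.1.le

lemma aux_lux_le (n : ℕ) (p : Esp n → ℝ) (f : Esp n → ℝ) (a : ℝ) (ha : 0 < a)
    (h : vMod n p (fun x => f x / a) ≤ 1) : luxNorm n p f ≤ a :=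
  csInf_le ⟨0, fun _ h => h.1.le⟩ ⟨ha, h⟩

lemma aux_pow (a : ℝ≥0∞) (s p : ℝ) (h1 : 2 ≤ s) (h2 : s ≤ p) :
    a ^ s ≤ a ^ (2 : ℝ) + a ^ p := by
  rcases le_total a 1 with h | h
  · exact (ENNReal.rpow_le_rpow_of_exponent_ge h h1).trans le_self_add
  · exact (ENNReal.rpow_le_rpow_of_exponent_le h h2).trans le_add_self

/-- Bound for the integral of `|uv|^r`. -/
lemma aux_G (n : ℕ) (p : Esp n → ℝ) (hpm : Measurable p) (u v : Esp n → ℝ)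
    (hum : AEMeasurable u volume) (hvm : AEMeasurable v volume) (r : ℝ)
    (hr : 1 ≤ r) (hp : ∀ᵐ x, 2 * r ≤ p x)
    (hu : vMod n p u ≤ 1) (hu2 : vMod n (fun _ => 2) u ≤ 1)
    (hv : vMod n p v ≤ 1) (hv2 : vMod n (fun _ => 2) v ≤ 1) :
    ∫⁻ x, (ENNReal.ofReal |u x * v x|) ^ r ≤ 4 := by
  have hm : ∀ w : Esp n → ℝ, AEMeasurable w volume →
      AEMeasurable (fun x => ENNReal.ofReal |w x|) volume := fun w hw => by
    have : AEMeasurable (fun x => |w x|) volume := continuous_abs.measurable.comp_aemeasurable hw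
    exact this.ennreal_ofReal
  have hu' := hm u hum
  have hv' := hm v hvm
  calc ∫⁻ x, (ENNReal.ofReal |u x * v x|) ^ r
      ≤ ∫⁻ x, ((ENNReal.ofReal |u x| ^ (2 : ℝ) + ENNReal.ofReal |u x| ^ p x)
          + (ENNReal.ofReal |v x| ^ (2 : ℝ) + ENNReal.ofReal |v x| ^ p x)) := by
        refine lintegral_mono_ae ?_
        filter_upwards [hp] with x hx
        rw [abs_mul, ENNReal.ofReal_mul (abs_nonneg _)]
        have key : ∀ a b : ℝ≥0∞, a ≤ b → (a * b) ^ r ≤ b ^ (2 : ℝ) + b ^ p x := fun a b hab => by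
          refine le_trans ?_ (aux_pow b (2 * r) (p x) (by linarith) hx)
          rw [ENNReal.rpow_mul, ENNReal.rpow_two, sq]
          exact ENNReal.rpow_le_rpow (mul_le_mul_left hab b) (by linarith)
        rcases le_total (ENNReal.ofReal |u x|) (ENNReal.ofReal |v x|) with h | h
        · exact (key _ _ h).trans le_add_self
        · rw [mul_comm]
          exact (key _ _ h).trans le_self_add
    _ = (vMod n (fun _ => 2) u + vMod n p u) + (vMod n (fun _ => 2) v + vMod n p v) := by
        rw [lintegral_add_left' (by fun_prop), lintegral_add_left' (by fun_prop),
          lintegral_add_left' (by fun_prop)]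
        rfl
    _ ≤ (1 + 1) + (1 + 1) := by gcongr
    _ = 4 := by norm_num

/-- Lemma 3.13, first estimate, of the paper: for `2 ≤ p⁻` and `p⁺ < ∞`,
`‖η_{t,m} * (uv)‖_{L^{p(·)} ∩ L^2} ≤ C max(t^{-nς(t)}, t^{-n/2}) ‖u‖_{L^{p(·)} ∩ L^2} ‖v‖_{L^{p(·)} ∩ L^2}`,
where `ζ(t) = 2/p⁻` for `0 < t ≤ 1`, `ζ(t) = 2/p⁺` for `t > 1`, and `ς` is the piecewise
quantity of equation (3.13). -/
theorem statement11 (n : ℕ) (hn : 1 ≤ n) (m : ℝ) (hm : (n : ℝ) < m)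
    (pexp : Esp n → ℝ) (hpmeas : Measurable pexp) (hp1 : ∀ x, 1 ≤ pexp x)
    (pm pp : ℝ) (hpm : pm = essInf pexp volume) (hpp : pp = essSup pexp volume)
    (hbdd : IsBoundedUnder (· ≤ ·) (ae (volume : Measure (Esp n))) pexp)
    (h2pm : 2 ≤ pm) :
    ∃ C : ℝ, 0 < C ∧ ∀ t : ℝ, 0 < t → ∀ u v : Esp n → ℝ,
      MemVLp n pexp u → MemVLp n (fun _ => (2 : ℝ)) u →
      MemVLp n pexp v → MemVLp n (fun _ => (2 : ℝ)) v →
      max (luxNorm n pexp (convR n (etaKer n t m) (fun x => u x * v x)))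
          (luxNorm n (fun _ => (2 : ℝ)) (convR n (etaKer n t m) (fun x => u x * v x))) ≤
        C * max
            (t ^ (-(n : ℝ) *
              (if (t ≤ 1 ∧ 2 ≤ pm ∧ pm ≤ 3) ∨ (1 < t ∧ 2 / pp < 1 - 1 / pm) then
                (pm / pp) * (1 - 1 / pm) +
                  (if t ≤ 1 then 2 / pm else 2 / pp) * (1 - pm / pp)
              else 1 - 1 / pm)))
            (t ^ (-(n : ℝ) / 2)) *
          max (luxNorm n pexp u) (luxNorm n (fun _ => (2 : ℝ)) u) *
          max (luxNorm n pexp v) (luxNorm n (fun _ => (2 : ℝ)) v) := by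
  have hpmle : ∀ᵐ x, pm ≤ pexp x := by
    rw [hpm]
    exact ae_essInf_le (isBoundedUnder_of_eventually_ge (a := 1) (Eventually.of_forall hp1))
  have hlepp : ∀ᵐ x, pexp x ≤ pp := by
    rw [hpp]
    exact ae_le_essSup hbdd
  have hpmpp : pm ≤ pp := by
    obtain ⟨x, h1, h2⟩ := (hpmle.and hlepp).exists
    exact h1.trans h2
  have hm0 : 0 ≤ m := by have : (0 : ℝ) ≤ n := n.cast_nonneg; linarith
  have hn0 : (0 : ℝ) ≤ n := n.cast_nonneg
  have hfin : ∫⁻ x : Esp n, ENNReal.ofReal ((1 + ‖x‖) ^ (-m)) < ∞ :=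
    finite_integral_one_add_norm (by simpa using hm)
  set A : ℝ := max 1 (∫⁻ x : Esp n, ENNReal.ofReal ((1 + ‖x‖) ^ (-m))).toReal with hAdef
  have hA1 : 1 ≤ A := le_max_left _ _
  have hA : ∫⁻ x : Esp n, ENNReal.ofReal ((1 + ‖x‖) ^ (-m)) ≤ ENNReal.ofReal A := by
    rw [← ENNReal.ofReal_toReal hfin.ne]
    exact ENNReal.ofReal_le_ofReal (le_max_right _ _)
  refine ⟨A * 4, by positivity, fun t ht u v hu hu2 hv hv2 => ?_⟩
  set S : ℝ := (if (t ≤ 1 ∧ 2 ≤ pm ∧ pm ≤ 3) ∨ (1 < t ∧ 2 / pp < 1 - 1 / pm) then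
                (pm / pp) * (1 - 1 / pm) +
                  (if t ≤ 1 then 2 / pm else 2 / pp) * (1 - pm / pp)
              else 1 - 1 / pm) with hS
  set T : ℝ := max (t ^ (-(n : ℝ) * S)) (t ^ (-(n : ℝ) / 2)) with hTdef
  have hT : 0 < T := lt_max_of_lt_right (by positivity)
  set a := max (luxNorm n pexp u) (luxNorm n (fun _ => (2 : ℝ)) u) with ha
  set b := max (luxNorm n pexp v) (luxNorm n (fun _ => (2 : ℝ)) v) with hb
  have ha0 : 0 ≤ a := (aux_lux_nonneg _ _ _).trans (le_max_left _ _)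
  have hb0 : 0 ≤ b := (aux_lux_nonneg _ _ _).trans (le_max_left _ _)
  -- choice of `r`
  have hchoice : ∃ r : ℝ, 1 ≤ r ∧ 2 * r ≤ pm ∧
      ∀ᵐ x, r ≤ pexp x ∧ (t ^ (-(n : ℝ))) ^ (1 / r - 1 / pexp x) ≤ T := by
    rcases le_or_gt t 1 with h1 | h1
    · refine ⟨pm / 2, by linarith, by linarith, ?_⟩
      filter_upwards [hpmle, hlepp] with x hx1 hx2
      refine ⟨by linarith, ?_⟩
      refine le_trans ?_ (le_max_left _ _)
      rw [← Real.rpow_mul ht.le]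
      apply Real.rpow_le_rpow_of_exponent_ge ht h1
      have hx0 : 0 < pexp x := by linarith
      have hpm0 : 0 < pm := by linarith
      have hpp0 : 0 < pp := by linarith
      have i1 : 1 / pp ≤ 1 / pexp x := one_div_le_one_div_of_le hx0 hx2
      have i2 : 0 < 1 / pp := by positivity
      have i3 : 1 / (pm / 2) = 2 * (1 / pm) := by field_simp
      have hle : 1 / (pm / 2) - 1 / pexp x ≤ S := by
        rw [hS, i3]
        by_cases h3 : pm ≤ 3
        · rw [if_pos (Or.inl ⟨h1, h2pm, h3⟩), if_pos h1]
          have : pm / pp * (1 - 1 / pm) + 2 / pm * (1 - pm / pp)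
              = 2 * (1 / pm) + (pm - 3) * (1 / pp) := by field_simp; ring
          rw [this]
          nlinarith
        · rw [if_neg (by
            rintro (h | h)
            · exact h3 h.2.2
            · linarith [h.1])]
          have : 1 / pm ≤ 1 / 3 := one_div_le_one_div_of_le (by norm_num) (by linarith)
          linarith
      have := mul_le_mul_of_nonneg_left hle hn0
      linarith
    · refine ⟨1, le_rfl, by linarith, ?_⟩
      filter_upwards [hpmle] with x hx1
      refine ⟨hp1 x, ?_⟩
      refine le_trans ?_ (le_max_right _ _)
      rw [← Real.rpow_mul ht.le]
      apply Real.rpow_le_rpow_of_exponent_le h1.le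
      have : 1 / pexp x ≤ 1 / 2 := one_div_le_one_div_of_le (by norm_num) (by linarith)
      have h5 : 1 / 2 ≤ 1 / 1 - 1 / pexp x := by linarith
      have := mul_le_mul_of_nonneg_left h5 hn0
      linarith
  obtain ⟨r, hr1, hrpm, hrq⟩ := hchoice
  have step : ∀ ε : ℝ, 0 < ε →
      max (luxNorm n pexp (convR n (etaKer n t m) (fun x => u x * v x)))
          (luxNorm n (fun _ => (2 : ℝ)) (convR n (etaKer n t m) (fun x => u x * v x))) ≤
        A * 4 * T * (a + ε) * (b + ε) := by
    intro ε hε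
    have ha' : 0 < a + ε := by linarith
    have hb' : 0 < b + ε := by linarith
    have two : ∀ _ : Esp n, (1 : ℝ) ≤ 2 := fun _ => by norm_num
    have hua := aux_lux n pexp hp1 u hu (a + ε) (by linarith [le_max_left (luxNorm n pexp u) (luxNorm n (fun _ => (2 : ℝ)) u)])
    have hua2 := aux_lux n _ two u hu2 (a + ε) (by linarith [le_max_right (luxNorm n pexp u) (luxNorm n (fun _ => (2 : ℝ)) u)])
    have hvb := aux_lux n pexp hp1 v hv (b + ε) (by linarith [le_max_left (luxNorm n pexp v) (luxNorm n (fun _ => (2 : ℝ)) v)])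
    have hvb2 := aux_lux n _ two v hv2 (b + ε) (by linarith [le_max_right (luxNorm n pexp v) (luxNorm n (fun _ => (2 : ℝ)) v)])
    have hum : AEMeasurable (fun x => u x / (a + ε)) volume := hu.1.div_const _
    have hvm : AEMeasurable (fun x => v x / (b + ε)) volume := hv.1.div_const _
    have hconv : ∀ x, convR n (etaKer n t m)
        (fun x => (u x / (a + ε)) * (v x / (b + ε))) x / (A * 4 * T) =
        convR n (etaKer n t m) (fun x => u x * v x) x / (A * 4 * T * (a + ε) * (b + ε)) := by
      intro x
      unfold convR
      have : ∀ y, etaKer n t m (x - y) * (u y / (a + ε) * (v y / (b + ε)))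
          = (etaKer n t m (x - y) * (u y * v y)) / ((a + ε) * (b + ε)) := fun y => by
        field_simp
      simp only [this]
      rw [integral_div, div_div]
      congr 1; ring
    have general : ∀ (r : ℝ), 1 ≤ r → 2 * r ≤ pm → ∀ q : Esp n → ℝ,
        (∀ᵐ x, r ≤ q x ∧ (t ^ (-(n : ℝ))) ^ (1 / r - 1 / q x) ≤ T) →
        luxNorm n q (convR n (etaKer n t m) (fun x => u x * v x))
          ≤ A * 4 * T * (a + ε) * (b + ε) := by
      intro r hr1 hrpm q hq
      apply aux_lux_le _ _ _ _ (by positivity)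
      have hG := aux_G n pexp hpmeas _ _ hum hvm r hr1
        (hpmle.mono fun x hx => hrpm.trans hx) hua hua2 hvb hvb2
      have := aux_main n m hm0 A hA1 hA t ht r hr1 q T hT hq _ (hum.mul hvm) hG
      simp only [Pi.mul_def, hconv] at this
      exact this
    refine max_le (general r hr1 hrpm pexp hrq) (general 1 le_rfl (by linarith) _ ?_)
    refine Eventually.of_forall fun x => ⟨by norm_num, ?_⟩
    refine le_trans (le_of_eq ?_) (le_max_right _ _)
    rw [← Real.rpow_mul ht.le]
    congr 1; ring
  have hlim : Tendsto (fun ε : ℝ => A * 4 * T * (a + ε) * (b + ε)) (nhdsWithin 0 (Set.Ioi 0))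
      (nhds (A * 4 * T * a * b)) := by
    have hc : Continuous (fun ε : ℝ => A * 4 * T * (a + ε) * (b + ε)) := by fun_prop
    have := hc.tendsto 0
    simp only [add_zero] at this
    exact this.mono_left nhdsWithin_le_nhds
  refine ge_of_tendsto hlim ?_
  filter_upwards [self_mem_nhdsWithin] with ε hε using step ε hε
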